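/- Under assumptions (A1)–(A2), there exist constants C₁, C₂, C₃ depending only on the bounds in (A1)–(A2) such that for all admissible states u = (ρ,w), û = (ρ̂,ŵ) and all residuals ê₁ ∈ L²(0,ℓ), ê₂ ∈ L²(0,ℓ): ∫₀^ℓ ê₁ (ε²(w² − ŵ²)/2 + P'(ρ) − P'(ρ̂)) dx + ∫₀^ℓ ê₂ a (ρw − ρ̂ŵ) dx ≤ H(u|û) + D(u|û) + C₁‖ê₁‖²_{L²} + C₂‖ê₂‖²_{L²} + C₃‖ê₂‖^{3/2}_{L^{3/2}}, where D(u|û) = (1/16) ∫₀^ℓ γ a ρ̂ (|w| + |ŵ|)(w − ŵ)² dx. -/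

import Mathlib

/-- The relative energy `H(u|û)` of the rescaled barotropic gas flow system. -/
noncomputable def relEnergy (ℓ g ε : ℝ) (a z P : ℝ → ℝ) (ρ w ρh wh : ℝ → ℝ) : ℝ :=
  ∫ x in (0:ℝ)..ℓ,
    (a x * (ε ^ 2 * ρ x * (w x) ^ 2 / 2 + P (ρ x) + g * z x * ρ x)
      - a x * (ε ^ 2 * ρh x * (wh x) ^ 2 / 2 + P (ρh x) + g * z x * ρh x)
      - (a x * (ε ^ 2 * (wh x) ^ 2 / 2 + deriv P (ρh x) + g * z x) * (ρ x - ρh x)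
          + a x * ε ^ 2 * ρh x * wh x * (w x - wh x)))

/-- The relative dissipation
`D(u|û) = (1/16) ∫₀^ℓ γ a ρ̂ (|w| + |ŵ|)(w − ŵ)² dx`. -/
noncomputable def relDissipation (ℓ : ℝ) (γ a ρh w wh : ℝ → ℝ) : ℝ :=
  (1 / 16) * ∫ x in (0:ℝ)..ℓ,
    γ x * a x * ρh x * (|w x| + |wh x|) * (w x - wh x) ^ 2

/-!
The relative energy density is the Bregman divergence of `(ρ, w) ↦ ε²ρw²/2 + P(ρ)`, because the
potential energy `g z ρ` is affine in the state. With `d = ρ - ρ̂` and `δ = w - ŵ` its kinetic part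
equals both `ε²(ρδ²/2 + ŵdδ)` and `ε²(ρ̂δ²/2 + (w + ŵ)dδ/2)`. Choosing the form that carries
`R = max ρ ρ̂` and using `P''(ξ) ≥ 4ε̄²w̄²/ξ ≥ 4ε̄²w̄²/R` for `ξ` between `ρ̂` and `ρ`, the pressure
part absorbs the cross term, and `d²` and `ε²δ²` are controlled. The residual terms are then
estimated pointwise: everything proportional to `d` or `εδ` by the quadratic Young inequality
against the relative energy, and `ê₂ a ρ̂ δ` by the Young inequality with exponents `3/2` and `3`
against the dissipation, where `|δ|³ ≤ (|w| + |ŵ|)δ²`.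
-/

open MeasureTheory Set

section Young

variable {κ c e f y : ℝ}

lemma mul_le_sq_add_sq_of_abs_le (hκ : 0 < κ) (hf : |f| ≤ c * |y|) :
    e * f ≤ κ * y ^ 2 + c ^ 2 / (4 * κ) * e ^ 2 := by
  have hsq : κ * y ^ 2 + c ^ 2 / (4 * κ) * e ^ 2 - |e| * (c * |y|)
      = (2 * κ * |y| - c * |e|) ^ 2 / (4 * κ) := by
    rw [← sq_abs y, ← sq_abs e]
    field_simp
    ring
  calc e * f ≤ |e| * |f| := (le_abs_self _).trans (abs_mul e f).le
    _ ≤ |e| * (c * |y|) := by gcongr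
    _ ≤ κ * y ^ 2 + c ^ 2 / (4 * κ) * e ^ 2 := by
      rw [← sub_nonneg, hsq]
      positivity

lemma mul_le_cube_add_rpow (hκ : 0 < κ) (e y : ℝ) :
    e * y ≤ κ * |y| ^ 3 + |e| ^ (3 / 2 : ℝ) / √κ := by
  have hrpow : |e| ^ (3 / 2 : ℝ) = |e| * √|e| := by
    rw [show (3 / 2 : ℝ) = 1 + 1 / 2 by norm_num,
      Real.rpow_add_of_nonneg (abs_nonneg e) (by norm_num) (by norm_num), Real.rpow_one,
      Real.sqrt_eq_rpow]
  have habs : e * y ≤ |e| * |y| := (le_abs_self _).trans (abs_mul e y).le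
  rw [hrpow]
  rcases le_total |e| (κ * |y| ^ 2) with hle | hge
  · calc e * y ≤ |e| * |y| := habs
      _ ≤ κ * |y| ^ 2 * |y| := by gcongr
      _ = κ * |y| ^ 3 := by ring
      _ ≤ κ * |y| ^ 3 + |e| * √|e| / √κ := le_add_of_nonneg_right (by positivity)
  · have hy : |y| ≤ √|e| / √κ := by
      rw [← Real.sqrt_div (abs_nonneg e)]
      exact Real.le_sqrt_of_sq_le ((le_div_iff₀' hκ).2 hge)
    calc e * y ≤ |e| * |y| := habs
      _ ≤ |e| * (√|e| / √κ) := by gcongr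
      _ = |e| * √|e| / √κ := by ring
      _ ≤ κ * |y| ^ 3 + |e| * √|e| / √κ := le_add_of_nonneg_left (by positivity)

end Young

section Bregman

variable {f : ℝ → ℝ} {x y K : ℝ}

/-- The Bregman divergence `f(y|x)` of `f`: the error at `y` of the first-order expansion of `f`
at `x`. Meaningful for differentiable `f` only, since `deriv` is `0` elsewhere. -/
noncomputable def bregman (f : ℝ → ℝ) (y x : ℝ) : ℝ :=
  f y - f x - deriv f x * (y - x)

lemma exists_bregman_eq_deriv2 (hf : ContDiff ℝ 2 f) (y x : ℝ) :
    ∃ ξ ∈ uIcc x y, bregman f y x = deriv (deriv f) ξ / 2 * (y - x) ^ 2 := by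
  rcases eq_or_ne x y with rfl | hxy
  · exact ⟨x, left_mem_uIcc, by simp [bregman]⟩
  obtain ⟨ξ, hξ, htaylor⟩ :=
    taylor_mean_remainder_lagrange_iteratedDeriv (n := 1) hxy hf.contDiffOn
  refine ⟨ξ, Ioo_subset_Icc_self hξ, ?_⟩
  have hderiv : iteratedDerivWithin 1 f (uIcc x y) x = deriv f x := by
    rw [iteratedDerivWithin_one]
    exact (hf.differentiable two_ne_zero x).derivWithin (uniqueDiffOn_uIcc hxy x left_mem_uIcc)
  rw [taylorWithinEval_succ, taylor_within_zero_eval, hderiv, iteratedDeriv_succ,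
    iteratedDeriv_one] at htaylor
  simp only [Nat.cast_zero, zero_add, Nat.factorial_zero, Nat.cast_one, mul_one, inv_one, pow_one,
    one_mul, smul_eq_mul, Nat.reduceAdd, Nat.factorial_two, Nat.cast_ofNat] at htaylor
  rw [bregman]
  linarith

lemma div_max_mul_sq_le_bregman (hf : ContDiff ℝ 2 f) (hx : 0 < x) (hy : 0 < y) (hK : 0 ≤ K)
    (hf2 : ∀ ξ ∈ uIcc x y, K ≤ ξ * deriv (deriv f) ξ) :
    K / (2 * max y x) * (y - x) ^ 2 ≤ bregman f y x := by
  obtain ⟨ξ, hξ, hbregman⟩ := exists_bregman_eq_deriv2 hf y x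
  have hξ_pos : 0 < ξ := (lt_min hx hy).trans_le hξ.1
  have hξ_le : ξ ≤ max y x := hξ.2.trans_eq (max_comm x y)
  have hderiv : K / max y x ≤ deriv (deriv f) ξ :=
    calc K / max y x ≤ K / ξ := by gcongr
      _ ≤ deriv (deriv f) ξ := (div_le_iff₀' hξ_pos).2 (hf2 ξ hξ)
  calc K / (2 * max y x) * (y - x) ^ 2 = K / max y x / 2 * (y - x) ^ 2 := by
        rw [mul_comm 2, div_mul_eq_div_div]
    _ ≤ deriv (deriv f) ξ / 2 * (y - x) ^ 2 := by gcongr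
    _ = bregman f y x := hbregman.symm

end Bregman

lemma abs_add_div_two_le {v u c : ℝ} (hv : |v| ≤ c) (hu : |u| ≤ c) : |(v + u) / 2| ≤ c := by
  rw [abs_div, abs_two, div_le_iff₀ two_pos]
  linarith [abs_add_le v u]

section RelEnergyDensity

/-- The relative energy per unit volume of the state `(r, v)` with respect to the state `(s, u)`,
i.e. the Bregman divergence of `(ρ, w) ↦ ε²ρw²/2 + P(ρ)`. The potential energy is omitted because,
being linear in the density, it does not contribute. -/
noncomputable def relEnergyDensity (ε : ℝ) (P : ℝ → ℝ) (r v s u : ℝ) : ℝ :=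
  ε ^ 2 * r * v ^ 2 / 2 + P r - (ε ^ 2 * s * u ^ 2 / 2 + P s)
    - ((ε ^ 2 * u ^ 2 / 2 + deriv P s) * (r - s) + ε ^ 2 * s * u * (v - u))

lemma relEnergy_eq_integral_relEnergyDensity (ℓ g ε : ℝ) (a z P ρ w ρh wh : ℝ → ℝ) :
    relEnergy ℓ g ε a z P ρ w ρh wh
      = ∫ x in (0 : ℝ)..ℓ, a x * relEnergyDensity ε P (ρ x) (w x) (ρh x) (wh x) := by
  unfold relEnergy relEnergyDensity
  congr 1 with x
  ring

variable {P : ℝ → ℝ} {ε εbar wbar r v s u : ℝ}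

lemma relEnergyDensity_eq_left (ε : ℝ) (P : ℝ → ℝ) (r v s u : ℝ) :
    relEnergyDensity ε P r v s u
      = ε ^ 2 * (r / 2 * (v - u) ^ 2 + u * (r - s) * (v - u)) + bregman P r s := by
  unfold relEnergyDensity bregman
  ring

lemma relEnergyDensity_eq_right (ε : ℝ) (P : ℝ → ℝ) (r v s u : ℝ) :
    relEnergyDensity ε P r v s u
      = ε ^ 2 * (s / 2 * (v - u) ^ 2 + (v + u) / 2 * (r - s) * (v - u)) + bregman P r s := by
  unfold relEnergyDensity bregman
  ring

lemma exists_relEnergyDensity_eq_max (ε : ℝ) (P : ℝ → ℝ) (r s : ℝ)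
    (hv : |v| ≤ wbar) (hu : |u| ≤ wbar) :
    ∃ q, |q| ≤ wbar ∧ relEnergyDensity ε P r v s u
      = ε ^ 2 * (max r s / 2 * (v - u) ^ 2 + q * (r - s) * (v - u)) + bregman P r s := by
  rcases le_total s r with hsr | hrs
  · exact ⟨u, hu, by rw [max_eq_left hsr, relEnergyDensity_eq_left]⟩
  · exact ⟨(v + u) / 2, abs_add_div_two_le hv hu,
      by rw [max_eq_right hrs, relEnergyDensity_eq_right]⟩

lemma quarter_mul_sq_sub_le_half_mul_sq_add_mul {R : ℝ} (hR : 0 < R) (q d δ : ℝ) :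
    R / 4 * δ ^ 2 - q ^ 2 / R * d ^ 2 ≤ R / 2 * δ ^ 2 + q * d * δ := by
  have hsq : R / 2 * δ ^ 2 + q * d * δ - (R / 4 * δ ^ 2 - q ^ 2 / R * d ^ 2)
      = (R * δ + 2 * q * d) ^ 2 / (4 * R) := by
    field_simp
    ring
  rw [← sub_nonneg, hsq]
  positivity

theorem add_sq_le_relEnergyDensity (hP : ContDiff ℝ 2 P) (hε : |ε| ≤ εbar)
    (hr : 0 < r) (hs : 0 < s) (hv : |v| ≤ wbar) (hu : |u| ≤ wbar)
    (hP2 : ∀ ξ ∈ uIcc s r, 4 * εbar ^ 2 * wbar ^ 2 ≤ ξ * deriv (deriv P) ξ) :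
    εbar ^ 2 * wbar ^ 2 / max r s * (r - s) ^ 2 + max r s / 4 * (ε * (v - u)) ^ 2
      ≤ relEnergyDensity ε P r v s u := by
  obtain ⟨q, hq, hdensity⟩ := exists_relEnergyDensity_eq_max ε P r s hv hu
  have hbregman := div_max_mul_sq_le_bregman hP hs hr (by positivity) hP2
  set R := max r s
  have hR : 0 < R := lt_max_of_lt_left hr
  have hεq : ε ^ 2 * q ^ 2 ≤ εbar ^ 2 * wbar ^ 2 := by
    gcongr ?_ * ?_
    · exact sq_le_sq.2 (hε.trans (le_abs_self _))
    · exact sq_le_sq.2 (hq.trans (le_abs_self _))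
  calc εbar ^ 2 * wbar ^ 2 / R * (r - s) ^ 2 + R / 4 * (ε * (v - u)) ^ 2
      = ε ^ 2 * (R / 4 * (v - u) ^ 2) - εbar ^ 2 * wbar ^ 2 / R * (r - s) ^ 2
          + 4 * εbar ^ 2 * wbar ^ 2 / (2 * R) * (r - s) ^ 2 := by
        field_simp
        ring
    _ ≤ ε ^ 2 * (R / 4 * (v - u) ^ 2) - ε ^ 2 * q ^ 2 / R * (r - s) ^ 2 + bregman P r s := by
        gcongr
    _ = ε ^ 2 * (R / 4 * (v - u) ^ 2 - q ^ 2 / R * (r - s) ^ 2) + bregman P r s := by ring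
    _ ≤ ε ^ 2 * (R / 2 * (v - u) ^ 2 + q * (r - s) * (v - u)) + bregman P r s := by
        gcongr
        exact quarter_mul_sq_sub_le_half_mul_sq_add_mul hR q (r - s) (v - u)
    _ = relEnergyDensity ε P r v s u := hdensity.symm

lemma add_sq_le_mul_relEnergyDensity {A alo rlo rhi : ℝ} (hP : ContDiff ℝ 2 P)
    (hε : |ε| ≤ εbar) (halo : 0 ≤ alo) (hA : alo ≤ A) (hrlo : 0 < rlo)
    (hr : r ∈ Icc rlo rhi) (hs : s ∈ Icc rlo rhi) (hv : |v| ≤ wbar) (hu : |u| ≤ wbar)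
    (hP2 : ∀ ξ ∈ Icc rlo rhi, 4 * εbar ^ 2 * wbar ^ 2 ≤ ξ * deriv (deriv P) ξ) :
    alo * (εbar ^ 2 * wbar ^ 2 / rhi) * (r - s) ^ 2 + alo * (rlo / 4) * (ε * (v - u)) ^ 2
      ≤ A * relEnergyDensity ε P r v s u := by
  have hr_pos : 0 < r := hrlo.trans_le hr.1
  have hs_pos : 0 < s := hrlo.trans_le hs.1
  have hrhi_pos : 0 < rhi := hr_pos.trans_le hr.2
  have hA_nonneg : 0 ≤ A := halo.trans hA
  calc alo * (εbar ^ 2 * wbar ^ 2 / rhi) * (r - s) ^ 2 + alo * (rlo / 4) * (ε * (v - u)) ^ 2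
      = alo * (εbar ^ 2 * wbar ^ 2 / rhi * (r - s) ^ 2 + rlo / 4 * (ε * (v - u)) ^ 2) := by ring
    _ ≤ A * (εbar ^ 2 * wbar ^ 2 / max r s * (r - s) ^ 2 + max r s / 4 * (ε * (v - u)) ^ 2) := by
        gcongr
        exacts [max_le hr.2 hs.2, le_max_of_le_left hr.1]
    _ ≤ A * relEnergyDensity ε P r v s u := by
        gcongr
        exact add_sq_le_relEnergyDensity hP hε hr_pos hs_pos hv hu
          fun ξ hξ => hP2 ξ (uIcc_subset_Icc hs hr hξ)

end RelEnergyDensity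

section Pointwise

variable {P : ℝ → ℝ} {ε εbar wbar r v s u κ : ℝ}

lemma mul_potential_sub_le {κ' M : ℝ} (hκ : 0 < κ) (hκ' : 0 < κ') (hε : |ε| ≤ εbar)
    (hv : |v| ≤ wbar) (hu : |u| ≤ wbar) (hM : |deriv P r - deriv P s| ≤ M * |r - s|) (e : ℝ) :
    e * (ε ^ 2 * (v ^ 2 - u ^ 2) / 2 + deriv P r - deriv P s)
      ≤ κ * (r - s) ^ 2 + κ' * (ε * (v - u)) ^ 2
        + (M ^ 2 / (4 * κ) + (εbar * wbar) ^ 2 / (4 * κ')) * e ^ 2 := by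
  have hkinetic : |ε ^ 2 * (v ^ 2 - u ^ 2) / 2| ≤ εbar * wbar * |ε * (v - u)| :=
    calc |ε ^ 2 * (v ^ 2 - u ^ 2) / 2| = |ε| * |(v + u) / 2| * |ε * (v - u)| := by
          rw [← abs_mul, ← abs_mul]
          ring_nf
      _ ≤ εbar * wbar * |ε * (v - u)| := by
          have := (abs_nonneg ε).trans hε
          gcongr
          exact abs_add_div_two_le hv hu
  linarith [mul_le_sq_add_sq_of_abs_le (e := e) hκ hM,
    mul_le_sq_add_sq_of_abs_le (e := e) hκ' hkinetic]

lemma mul_flux_sub_le {A ahi rhi γ γlo : ℝ} (hκ : 0 < κ) (hA : 0 ≤ A) (hAhi : A ≤ ahi)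
    (hs : 0 ≤ s) (hsr : s ≤ rhi) (hγlo : 0 < γlo) (hγ : γlo ≤ γ) (hv : |v| ≤ wbar) (e : ℝ) :
    e * (A * (r * v - s * u))
      ≤ κ * (r - s) ^ 2 + 1 / 16 * (γ * A * s * (|v| + |u|) * (v - u) ^ 2)
        + (ahi * wbar) ^ 2 / (4 * κ) * e ^ 2
        + ahi * rhi / √(γlo / 16) * |e| ^ (3 / 2 : ℝ) := by
  have hdensity : |A * v * (r - s)| ≤ ahi * wbar * |r - s| := by
    rw [abs_mul, abs_mul, abs_of_nonneg hA]
    have := hA.trans hAhi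
    gcongr
  have hvelocity : A * s * (e * (v - u))
      ≤ 1 / 16 * (γ * A * s * (|v| + |u|) * (v - u) ^ 2)
        + ahi * rhi / √(γlo / 16) * |e| ^ (3 / 2 : ℝ) :=
    calc A * s * (e * (v - u))
        ≤ A * s * (γlo / 16 * |v - u| ^ 3 + |e| ^ (3 / 2 : ℝ) / √(γlo / 16)) := by
          gcongr
          exact mul_le_cube_add_rpow (by positivity) e (v - u)
      _ = 1 / 16 * (γlo * A * s * |v - u| * (v - u) ^ 2)
            + A * s / √(γlo / 16) * |e| ^ (3 / 2 : ℝ) := by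
          rw [← sq_abs (v - u)]
          ring
      _ ≤ 1 / 16 * (γ * A * s * (|v| + |u|) * (v - u) ^ 2)
            + ahi * rhi / √(γlo / 16) * |e| ^ (3 / 2 : ℝ) := by
          have := abs_sub v u
          have := hγlo.le.trans hγ
          have := hA.trans hAhi
          gcongr
  linarith [mul_le_sq_add_sq_of_abs_le (e := e) hκ hdensity]

lemma exists_pointwise_residual_bound (hP : ContDiff ℝ 2 P)
    {rlo rhi alo ahi γlo : ℝ} (hrlo : 0 < rlo) (hrr : rlo ≤ rhi) (hwbar : 0 < wbar)
    (hεbar : 0 < εbar) (halo : 0 < alo) (haa : alo ≤ ahi) (hγlo : 0 < γlo)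
    (hA1 : ∀ r ∈ Icc rlo rhi, 4 * εbar ^ 2 * wbar ^ 2 ≤ r * deriv (deriv P) r) :
    ∃ C1 C2 C3 : ℝ, 0 ≤ C1 ∧ 0 ≤ C2 ∧ 0 ≤ C3 ∧
      ∀ {ε A γ r v s u : ℝ} (e1 e2 : ℝ), |ε| ≤ εbar → A ∈ Icc alo ahi → γlo ≤ γ →
        r ∈ Icc rlo rhi → s ∈ Icc rlo rhi → |v| ≤ wbar → |u| ≤ wbar →
        e1 * (ε ^ 2 * (v ^ 2 - u ^ 2) / 2 + deriv P r - deriv P s) + e2 * (A * (r * v - s * u))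
          ≤ A * relEnergyDensity ε P r v s u
            + 1 / 16 * (γ * A * s * (|v| + |u|) * (v - u) ^ 2)
            + C1 * e1 ^ 2 + C2 * e2 ^ 2 + C3 * |e2| ^ (3 / 2 : ℝ) := by
  have hrhi : 0 < rhi := hrlo.trans_le hrr
  have hahi : 0 < ahi := halo.trans_le haa
  obtain ⟨M, hM⟩ := (ContDiff.deriv' (n := 1) hP).contDiffOn.exists_lipschitzOnWith
    one_ne_zero (convex_Icc rlo rhi) isCompact_Icc
  set κ := alo * (εbar ^ 2 * wbar ^ 2 / rhi) / 2 with κ_def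
  set κ' := alo * (rlo / 4)
  have hκ : 0 < κ := by positivity
  have hκ' : 0 < κ' := by positivity
  refine ⟨M ^ 2 / (4 * κ) + (εbar * wbar) ^ 2 / (4 * κ'), (ahi * wbar) ^ 2 / (4 * κ),
    ahi * rhi / √(γlo / 16), by positivity, by positivity, by positivity,
    fun {ε A γ r v s u} e1 e2 hε hA hγ hr hs hv hu => ?_⟩
  have henergy : 2 * κ * (r - s) ^ 2 + κ' * (ε * (v - u)) ^ 2
      ≤ A * relEnergyDensity ε P r v s u := by
    rw [κ_def, mul_div_cancel₀ _ two_ne_zero]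
    exact add_sq_le_mul_relEnergyDensity hP hε halo.le hA.1 hrlo hr hs hv hu hA1
  have hpotential := mul_potential_sub_le hκ hκ' hε hv hu (hM.norm_sub_le hr hs) e1
  have hflux := mul_flux_sub_le (r := r) (u := u) hκ (halo.le.trans hA.1) hA.2
    (hrlo.le.trans hs.1) hs.2 hγlo hγ hv e2
  linarith

end Pointwise

section Integration

variable {α : Type*} [MeasurableSpace α] {μ : Measure α}

lemma memLp_top_comp_of_ae_mem_compact {E : Type*} [TopologicalSpace E] [MeasurableSpace E]
    [OpensMeasurableSpace E] {F : E → ℝ} (hF : Continuous F) {K : Set E} (hK : IsCompact K)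
    {φ : α → E} (hφ : AEMeasurable φ μ) (hφK : ∀ᵐ x ∂μ, φ x ∈ K) :
    MemLp (fun x => F (φ x)) ⊤ μ := by
  obtain ⟨C, hC⟩ := hK.exists_bound_of_continuousOn hF.continuousOn
  exact memLp_top_of_bound (hF.measurable.comp_aemeasurable hφ).aestronglyMeasurable C
    (hφK.mono fun x hx => hC (φ x) hx)

lemma integrable_abs_rpow_three_halves [IsFiniteMeasure μ] {f : α → ℝ} (hf : MemLp f 2 μ) :
    Integrable (fun x => |f x| ^ (3 / 2 : ℝ)) μ :=
  integrable_norm_rpow_of_le hf.1 (by norm_num) zero_le_two (by norm_num)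
    (by simpa using hf.integrable_sq)

/-- Coefficients `a`, `γ` and states `(ρ, w)`, `(ρh, wh)` that are measurable (jointly, which is
the same as componentwise) and satisfy the pointwise bounds of (A1)–(A2) almost everywhere. -/
structure IsAdmissible (μ : Measure α) (alo ahi γlo γhi rlo rhi wbar : ℝ)
    (a γ ρ w ρh wh : α → ℝ) : Prop where
  aemeasurable : AEMeasurable (fun x => (a x, γ x, ρ x, w x, ρh x, wh x)) μ
  ae_mem : ∀ᵐ x ∂μ, (a x, γ x, ρ x, w x, ρh x, wh x) ∈
    Icc alo ahi ×ˢ Icc γlo γhi ×ˢ Icc rlo rhi ×ˢ Icc (-wbar) wbar ×ˢ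
      Icc rlo rhi ×ˢ Icc (-wbar) wbar

variable {alo ahi γlo γhi rlo rhi wbar : ℝ} {a γ ρ w ρh wh : α → ℝ}

lemma IsAdmissible.memLp_top_comp (h : IsAdmissible μ alo ahi γlo γhi rlo rhi wbar a γ ρ w ρh wh)
    {F : ℝ × ℝ × ℝ × ℝ × ℝ × ℝ → ℝ} (hF : Continuous F) :
    MemLp (fun x => F (a x, γ x, ρ x, w x, ρh x, wh x)) ⊤ μ :=
  memLp_top_comp_of_ae_mem_compact hF
    (isCompact_Icc.prod <| isCompact_Icc.prod <| isCompact_Icc.prod <| isCompact_Icc.prod <|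
      isCompact_Icc.prod isCompact_Icc) h.aemeasurable h.ae_mem

lemma IsAdmissible.integrable_mul_potential_sub [IsFiniteMeasure μ]
    (h : IsAdmissible μ alo ahi γlo γhi rlo rhi wbar a γ ρ w ρh wh)
    {P : ℝ → ℝ} (hP : ContDiff ℝ 2 P) (ε : ℝ) {e : α → ℝ} (he : MemLp e 2 μ) :
    Integrable (fun x => e x * (ε ^ 2 * ((w x) ^ 2 - (wh x) ^ 2) / 2
      + deriv P (ρ x) - deriv P (ρh x))) μ := by
  have hderiv : Continuous (deriv P) := hP.continuous_deriv one_le_two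
  exact (he.integrable one_le_two).mul_of_top_left (h.memLp_top_comp
    (F := fun (_, _, r, v, s, u) => ε ^ 2 * (v ^ 2 - u ^ 2) / 2 + deriv P r - deriv P s)
    (by fun_prop))

lemma IsAdmissible.integrable_mul_flux_sub [IsFiniteMeasure μ]
    (h : IsAdmissible μ alo ahi γlo γhi rlo rhi wbar a γ ρ w ρh wh)
    {e : α → ℝ} (he : MemLp e 2 μ) :
    Integrable (fun x => e x * (a x * (ρ x * w x - ρh x * wh x))) μ :=
  (he.integrable one_le_two).mul_of_top_left (h.memLp_top_comp
    (F := fun (A, _, r, v, s, u) => A * (r * v - s * u)) (by fun_prop))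

lemma IsAdmissible.integrable_mul_relEnergyDensity [IsFiniteMeasure μ]
    (h : IsAdmissible μ alo ahi γlo γhi rlo rhi wbar a γ ρ w ρh wh)
    {P : ℝ → ℝ} (hP : ContDiff ℝ 2 P) (ε : ℝ) :
    Integrable (fun x => a x * relEnergyDensity ε P (ρ x) (w x) (ρh x) (wh x)) μ := by
  have hcont : Continuous P := hP.continuous
  have hderiv : Continuous (deriv P) := hP.continuous_deriv one_le_two
  exact (h.memLp_top_comp (F := fun (A, _, r, v, s, u) => A * relEnergyDensity ε P r v s u)
    (by unfold relEnergyDensity; fun_prop)).integrable le_top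

lemma IsAdmissible.integrable_dissipation [IsFiniteMeasure μ]
    (h : IsAdmissible μ alo ahi γlo γhi rlo rhi wbar a γ ρ w ρh wh) :
    Integrable (fun x => γ x * a x * ρh x * (|w x| + |wh x|) * (w x - wh x) ^ 2) μ :=
  (h.memLp_top_comp (F := fun (A, G, _, v, s, u) => G * A * s * (|v| + |u|) * (v - u) ^ 2)
    (by fun_prop)).integrable le_top

theorem exists_integral_residual_bound {P : ℝ → ℝ} (hP : ContDiff ℝ 2 P) {εbar : ℝ}
    (hrlo : 0 < rlo) (hrr : rlo ≤ rhi) (hwbar : 0 < wbar) (hεbar : 0 < εbar)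
    (halo : 0 < alo) (haa : alo ≤ ahi) (hγlo : 0 < γlo)
    (hA1 : ∀ r ∈ Icc rlo rhi, 4 * εbar ^ 2 * wbar ^ 2 ≤ r * deriv (deriv P) r) :
    ∃ C1 C2 C3 : ℝ, 0 ≤ C1 ∧ 0 ≤ C2 ∧ 0 ≤ C3 ∧
      ∀ {α : Type*} [MeasurableSpace α] {μ : Measure α} [IsFiniteMeasure μ] {γhi ε : ℝ}
        {a γ ρ w ρh wh e1 e2 : α → ℝ}, |ε| ≤ εbar →
        IsAdmissible μ alo ahi γlo γhi rlo rhi wbar a γ ρ w ρh wh →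
        MemLp e1 2 μ → MemLp e2 2 μ →
        (∫ x, e1 x * (ε ^ 2 * ((w x) ^ 2 - (wh x) ^ 2) / 2 + deriv P (ρ x) - deriv P (ρh x)) ∂μ)
          + (∫ x, e2 x * (a x * (ρ x * w x - ρh x * wh x)) ∂μ)
          ≤ (∫ x, a x * relEnergyDensity ε P (ρ x) (w x) (ρh x) (wh x) ∂μ)
            + 1 / 16 * (∫ x, γ x * a x * ρh x * (|w x| + |wh x|) * (w x - wh x) ^ 2 ∂μ)
            + C1 * (∫ x, (e1 x) ^ 2 ∂μ) + C2 * (∫ x, (e2 x) ^ 2 ∂μ)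
            + C3 * (∫ x, |e2 x| ^ (3 / 2 : ℝ) ∂μ) := by
  obtain ⟨C1, C2, C3, hC1, hC2, hC3, hpointwise⟩ :=
    exists_pointwise_residual_bound hP hrlo hrr hwbar hεbar halo haa hγlo hA1
  refine ⟨C1, C2, C3, hC1, hC2, hC3,
    fun {α _ μ _ γhi ε a γ ρ w ρh wh e1 e2} hε hadm he1 he2 => ?_⟩
  have hpotential := hadm.integrable_mul_potential_sub hP ε he1
  have hflux := hadm.integrable_mul_flux_sub he2
  have henergy := hadm.integrable_mul_relEnergyDensity hP ε
  have hdissipation := hadm.integrable_dissipation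
  have he1_sq := he1.integrable_sq
  have he2_sq := he2.integrable_sq
  have he2_rpow := integrable_abs_rpow_three_halves he2
  simp only [← integral_const_mul]
  rw [← integral_add (by fun_prop) (by fun_prop), ← integral_add (by fun_prop) (by fun_prop),
    ← integral_add (by fun_prop) (by fun_prop), ← integral_add (by fun_prop) (by fun_prop),
    ← integral_add (by fun_prop) (by fun_prop)]
  refine integral_mono_ae (by fun_prop) (by fun_prop) (hadm.ae_mem.mono ?_)
  rintro x ⟨hA, hγ, hr, hv, hs, hu⟩
  exact hpointwise (e1 x) (e2 x) hε hA hγ.1 hr hs (abs_le.2 hv) (abs_le.2 hu)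

lemma memLp_Ioc_of_continuous {f : ℝ → ℝ} (hf : Continuous f) (b c : ℝ) (p : ENNReal) :
    MemLp f p (volume.restrict (Ioc b c)) :=
  (memLp_top_comp_of_ae_mem_compact hf isCompact_Icc aemeasurable_id
    (ae_restrict_of_forall_mem measurableSet_Ioc fun _ hx => Ioc_subset_Icc_self hx)).mono_exponent
    le_top

lemma isAdmissible_Ioc_of_continuous {b c alo ahi γlo γhi rlo rhi wbar : ℝ}
    {a γ ρ w ρh wh : ℝ → ℝ} (ha : Continuous a) (hγ : Continuous γ) (hρ : Continuous ρ)
    (hw : Continuous w) (hρh : Continuous ρh) (hwh : Continuous wh)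
    (ha_mem : ∀ x, alo ≤ a x ∧ a x ≤ ahi) (hγ_mem : ∀ x, γlo ≤ γ x ∧ γ x ≤ γhi)
    (hstate : ∀ x ∈ Icc b c, rlo ≤ ρ x ∧ ρ x ≤ rhi ∧ rlo ≤ ρh x ∧ ρh x ≤ rhi
      ∧ |w x| ≤ wbar ∧ |wh x| ≤ wbar) :
    IsAdmissible (volume.restrict (Ioc b c)) alo ahi γlo γhi rlo rhi wbar a γ ρ w ρh wh where
  aemeasurable := by fun_prop
  ae_mem := ae_restrict_of_forall_mem measurableSet_Ioc fun x hx => by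
    obtain ⟨hρ_lo, hρ_hi, hρh_lo, hρh_hi, hw_le, hwh_le⟩ := hstate x (Ioc_subset_Icc_self hx)
    exact ⟨ha_mem x, hγ_mem x, ⟨hρ_lo, hρ_hi⟩, abs_le.1 hw_le, ⟨hρh_lo, hρh_hi⟩, abs_le.1 hwh_le⟩

end Integration

theorem residual_duality_bound_general
    {P : ℝ → ℝ} (hP : ContDiff ℝ 2 P) {rlo rhi wbar εbar alo ahi γlo : ℝ}
    (hrlo : 0 < rlo) (hrr : rlo ≤ rhi) (hwbar : 0 < wbar) (hεbar : 0 < εbar)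
    (halo : 0 < alo) (haa : alo ≤ ahi) (hγlo : 0 < γlo)
    (hA1 : ∀ r ∈ Icc rlo rhi, 4 * εbar ^ 2 * wbar ^ 2 ≤ r * deriv (deriv P) r) :
    ∃ C1 C2 C3 : ℝ, 0 ≤ C1 ∧ 0 ≤ C2 ∧ 0 ≤ C3 ∧
      ∀ (ℓ g γhi ε : ℝ) (a z γ ρ w ρh wh eh1 eh2 : ℝ → ℝ), 0 ≤ ℓ → |ε| ≤ εbar →
        IsAdmissible (volume.restrict (Ioc 0 ℓ)) alo ahi γlo γhi rlo rhi wbar a γ ρ w ρh wh →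
        MemLp eh1 2 (volume.restrict (Ioc 0 ℓ)) → MemLp eh2 2 (volume.restrict (Ioc 0 ℓ)) →
        (∫ x in (0 : ℝ)..ℓ,
            eh1 x * (ε ^ 2 * ((w x) ^ 2 - (wh x) ^ 2) / 2 + deriv P (ρ x) - deriv P (ρh x)))
          + (∫ x in (0 : ℝ)..ℓ, eh2 x * (a x * (ρ x * w x - ρh x * wh x)))
          ≤ relEnergy ℓ g ε a z P ρ w ρh wh + relDissipation ℓ γ a ρh w wh
            + C1 * (∫ x in (0 : ℝ)..ℓ, (eh1 x) ^ 2)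
            + C2 * (∫ x in (0 : ℝ)..ℓ, (eh2 x) ^ 2)
            + C3 * (∫ x in (0 : ℝ)..ℓ, |eh2 x| ^ ((3 : ℝ) / 2)) := by
  obtain ⟨C1, C2, C3, hC1, hC2, hC3, hintegral⟩ :=
    exists_integral_residual_bound hP hrlo hrr hwbar hεbar halo haa hγlo hA1
  refine ⟨C1, C2, C3, hC1, hC2, hC3,
    fun ℓ g γhi ε a z γ ρ w ρh wh eh1 eh2 hℓ hε hadm heh1 heh2 => ?_⟩
  rw [relEnergy_eq_integral_relEnergyDensity, relDissipation]
  simp only [intervalIntegral.integral_of_le hℓ]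
  exact hintegral hε hadm heh1 heh2

/-- condition (C3): under assumptions (A1)–(A2) there exist
constants `C₁, C₂, C₃` depending only on the bounds in (A1)–(A2) such that
`⟨ê, z(u) − z(û)⟩ = ∫₀^ℓ ê₁ (ε²(w²−ŵ²)/2 + P'(ρ) − P'(ρ̂)) dx
   + ∫₀^ℓ ê₂ a (ρw − ρ̂ŵ) dx
 ≤ H(u|û) + D(u|û) + C₁‖ê₁‖²_{L²} + C₂‖ê₂‖²_{L²} + C₃‖ê₂‖^{3/2}_{L^{3/2}}`. -/
theorem residual_duality_bound
    (ℓ g : ℝ) (hℓ : 0 < ℓ)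
    (P : ℝ → ℝ) (hP : ContDiff ℝ (⊤ : ℕ∞) P) (hPconv : StrictConvexOn ℝ (Set.Ioi 0) P)
    (rlo rhi wbar εbar alo ahi γlo γhi gzbar : ℝ)
    (hrlo : 0 < rlo) (hrr : rlo ≤ rhi) (hwbar : 0 < wbar) (hεbar : 0 < εbar)
    (halo : 0 < alo) (haa : alo ≤ ahi) (hγlo : 0 < γlo) (hγγ : γlo ≤ γhi)
    (hA1 : ∀ r ∈ Set.Icc rlo rhi, 4 * εbar ^ 2 * wbar ^ 2 ≤ r * deriv (deriv P) r) :
    ∃ C1 C2 C3 : ℝ, 0 ≤ C1 ∧ 0 ≤ C2 ∧ 0 ≤ C3 ∧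
      ∀ (a z γ : ℝ → ℝ) (ε : ℝ) (ρ w ρh wh eh1 eh2 : ℝ → ℝ),
        Continuous a → Continuous z → Continuous γ →
        Continuous ρ → Continuous w → Continuous ρh → Continuous wh →
        Continuous eh1 → Continuous eh2 →
        (∀ x, alo ≤ a x ∧ a x ≤ ahi) → (∀ x, |g * z x| ≤ gzbar) →
        (∀ x, γlo ≤ γ x ∧ γ x ≤ γhi) →
        0 ≤ ε → ε ≤ εbar →
        (∀ x ∈ Set.Icc (0:ℝ) ℓ,
          rlo ≤ ρ x ∧ ρ x ≤ rhi ∧ rlo ≤ ρh x ∧ ρh x ≤ rhi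
            ∧ |w x| ≤ wbar ∧ |wh x| ≤ wbar) →
        (∫ x in (0:ℝ)..ℓ,
            eh1 x * (ε ^ 2 * ((w x) ^ 2 - (wh x) ^ 2) / 2
                + deriv P (ρ x) - deriv P (ρh x)))
          + (∫ x in (0:ℝ)..ℓ, eh2 x * (a x * (ρ x * w x - ρh x * wh x)))
          ≤ relEnergy ℓ g ε a z P ρ w ρh wh + relDissipation ℓ γ a ρh w wh
            + C1 * (∫ x in (0:ℝ)..ℓ, (eh1 x) ^ 2)
            + C2 * (∫ x in (0:ℝ)..ℓ, (eh2 x) ^ 2)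
            + C3 * (∫ x in (0:ℝ)..ℓ, |eh2 x| ^ ((3:ℝ) / 2)) := by
  obtain ⟨C1, C2, C3, hC1, hC2, hC3, hbound⟩ := residual_duality_bound_general
    (contDiff_infty.1 hP 2) hrlo hrr hwbar hεbar halo haa hγlo hA1
  exact ⟨C1, C2, C3, hC1, hC2, hC3, fun a z γ ε ρ w ρh wh eh1 eh2 ca _ cγ cρ cw cρh cwh ceh1 ceh2
    ha _ hγ hε hεle hstate => hbound ℓ g γhi ε a z γ ρ w ρh wh eh1 eh2 hℓ.le
    ((abs_of_nonneg hε).trans_le hεle)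
    (isAdmissible_Ioc_of_continuous ca cγ cρ cw cρh cwh ha hγ hstate)
    (memLp_Ioc_of_continuous ceh1 0 ℓ 2) (memLp_Ioc_of_continuous ceh2 0 ℓ 2)⟩
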